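/- Let A be the real involutive algebra ℂ ⊕ ℍ ⊕ M₃(ℂ) acting on a finite-dimensional complex Hilbert space, and consider the determinant condition defining SU(A) ⊂ U(A) for the 96-dimensional representation H_F. Then the connected component of the identity of SU(A_F) is isomorphic to (U(1) × SU(2) × SU(3)) / Γ for a finite abelian group Γ; in particular the Lie algebra of SU(A_F) is u(1) ⊕ su(2) ⊕ su(3). -/

import Mathlib

open Matrix
open scoped Quaternion

/-- The algebra `A_F = ℂ ⊕ ℍ ⊕ M₃(ℂ)`. -/
abbrev AF : Type := ℂ × ℍ[ℝ] × Matrix (Fin 3) (Fin 3) ℂ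

/-- The standard embedding of the quaternions into `M₂(ℂ)`. -/
noncomputable def quatToM2 (q : ℍ[ℝ]) : Matrix (Fin 2) (Fin 2) ℂ :=
  !![⟨q.re, q.imI⟩, ⟨q.imJ, q.imK⟩; ⟨-q.imJ, q.imK⟩, ⟨q.re, -q.imI⟩]

/-- The determinant of the action of `u = (λ, q, m) ∈ A_F` on the `96`-dimensional
Hilbert space `H_F` (three generations of the `32`-dimensional bimodule `M_F`):
per generation, `(λ, λ̄)` on right-handed leptons, `q` on the left-handed lepton
doublet, `(λ, λ̄) ⊗ 1₃` and `q ⊗ 1₃` on quarks, `λ` on the four antileptons and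
`m ⊗ 1₄` on antiquarks. -/
noncomputable def DetHF (u : AF) : ℂ :=
  ((Matrix.diagonal ![u.1, starRingEnd ℂ u.1]).det * (quatToM2 u.2.1).det *
      (Matrix.diagonal ![u.1, starRingEnd ℂ u.1]).det ^ 3 * (quatToM2 u.2.1).det ^ 3 *
      u.1 ^ 4 * (u.2.2).det ^ 4) ^ 3

/-- The unimodular unitary group `SU(A_F) = {u ∈ U(A_F) : Det(u) = 1}`, as a subset
of `U(A_F)`. -/
noncomputable def SUAF : Set (unitary AF) := {u : unitary AF | DetHF (u : AF) = 1}

/-! The determinant on `H_F` is the twelfth power of the character `χ(λ, q, m) = λ det m` of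
`U(A_F)`, so `χ` takes finitely many values on `SU(A_F)` and the identity component lies in the
fibre `χ = 1`. Extracting a cube root of `λ` shows that this fibre is the image of
`(z, A, B) ↦ (z³, A, z⁻¹B)` on `U(1) × SU(2) × SU(3)`. The latter group is connected: a unitary
matrix has finite spectrum, so multiplying it by a scalar moves it within distance `2` of `1`, and
`SU(n)` is a retract of `U(n)`. A point of the kernel is determined by its coordinate `z`, a cube
root of unity. -/

theorem connectedComponentIn_eq_inter_fiber {X Y : Type*} [TopologicalSpace X]
    [TopologicalSpace Y] {f : X → Y} {S : Set X} {x : X}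
    (hf : ContinuousOn f S) (hS : IsTotallyDisconnected (f '' S)) (hx : x ∈ S)
    (hfiber : IsPreconnected (S ∩ f ⁻¹' {f x})) :
    connectedComponentIn S x = S ∩ f ⁻¹' {f x} := by
  have hsub : connectedComponentIn S x ⊆ S := connectedComponentIn_subset S x
  refine Set.Subset.antisymm (fun y hy => ⟨hsub hy, ?_⟩)
    (hfiber.subset_connectedComponentIn ⟨hx, rfl⟩ Set.inter_subset_left)
  exact hS _ (Set.image_mono hsub) (isPreconnected_connectedComponentIn.image f (hf.mono hsub))
    (Set.mem_image_of_mem f hy) (Set.mem_image_of_mem f (mem_connectedComponentIn hx))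

section UnitaryGroups

theorem mem_unitary_prod_iff {R S : Type*} [Monoid R] [StarMul R] [Monoid S] [StarMul S]
    {u : R × S} : u ∈ unitary (R × S) ↔ u.1 ∈ unitary R ∧ u.2 ∈ unitary S := by
  simp only [Unitary.mem_iff, Prod.ext_iff, Prod.fst_mul, Prod.snd_mul, Prod.fst_star,
    Prod.snd_star, Prod.fst_one, Prod.snd_one]
  tauto

theorem mem_unitary_complex_iff_norm_eq_one {z : ℂ} : z ∈ unitary ℂ ↔ ‖z‖ = 1 := by
  rw [Unitary.mem_iff_star_mul_self, Complex.star_def, Complex.conj_mul']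
  norm_cast
  exact pow_eq_one_iff_of_nonneg (norm_nonneg z) two_ne_zero

theorem exists_unitary_complex_pow_eq (w : unitary ℂ) {n : ℕ} (hn : n ≠ 0) :
    ∃ z : unitary ℂ, z ^ n = w := by
  obtain ⟨z, hz⟩ := IsAlgClosed.exists_pow_nat_eq (w : ℂ) hn.bot_lt
  have hz_norm : ‖z‖ = 1 := by
    rw [← pow_eq_one_iff_of_nonneg (norm_nonneg z) hn, ← norm_pow, hz]
    exact CStarRing.norm_of_mem_unitary w.2
  exact ⟨⟨z, mem_unitary_complex_iff_norm_eq_one.2 hz_norm⟩, Subtype.ext hz⟩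

theorem isPathConnected_unitary_complex : IsPathConnected ((unitary ℂ : Submonoid ℂ) : Set ℂ) := by
  have h_sphere : ((unitary ℂ : Submonoid ℂ) : Set ℂ) = Metric.sphere 0 1 := by
    ext z
    rw [SetLike.mem_coe, mem_unitary_complex_iff_norm_eq_one, mem_sphere_zero_iff_norm]
  rw [h_sphere]
  exact isPathConnected_sphere (Complex.rank_real_complex ▸ Cardinal.one_lt_two) 0 zero_le_one

instance pathConnectedSpace_unitary_complex : PathConnectedSpace (unitary ℂ) :=
  isPathConnected_iff_pathConnectedSpace.1 isPathConnected_unitary_complex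

theorem infinite_unitary_complex : ((unitary ℂ : Submonoid ℂ) : Set ℂ).Infinite :=
  isPathConnected_unitary_complex.isConnected.isPreconnected.infinite_of_nontrivial
    ⟨1, one_mem _, -1, by simp [Unitary.mem_iff], by norm_num⟩

/-- The unitary `-z⁻¹u` is at distance less than `2` from `1`, and rotating its scalar factor joins
it to `u`. -/
theorem joined_one_of_notMem_spectrum {A : Type*} [CStarAlgebra A] {u : unitary A}
    {z : unitary ℂ} (hz : (z : ℂ) ∉ spectrum ℂ (u : A)) : Joined 1 u := by
  let c : unitary ℂ := -star z
  have hcz : Unitary.toUnits c • (z : ℂ) = -1 := by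
    change -star (z : ℂ) * z = -1
    rw [neg_mul, Unitary.star_mul_self_of_mem z.2]
  have h_spectrum : -1 ∉ spectrum ℂ ((c • u : unitary A) : A) := by
    rw [← hcz]
    exact mt spectrum.smul_mem_smul_iff.1 hz
  have h_near : Joined 1 (c • u) :=
    Unitary.joined _ _ ((Unitary.norm_sub_one_lt_two_iff (c • u).2).2 h_spectrum)
  have h_rotate : Joined (c • u) ((1 : unitary ℂ) • u) :=
    (PathConnectedSpace.joined c 1).map (f := fun w : unitary ℂ => w • u)
      (.subtype_mk (continuous_subtype_val.smul continuous_const) _)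
  rw [one_smul] at h_rotate
  exact h_near.trans h_rotate

variable {n : Type*} [Fintype n] [DecidableEq n]

open scoped Matrix.Norms.L2Operator in
instance pathConnectedSpace_unitaryGroup : PathConnectedSpace (unitaryGroup n ℂ) := by
  refine pathConnectedSpace_iff_eq.2 ⟨1, Set.eq_univ_of_forall fun u => ?_⟩
  obtain ⟨z, hz, hz_spectrum⟩ :=
    infinite_unitary_complex.exists_notMem_finite (Matrix.finite_spectrum (u : Matrix n n ℂ))
  exact joined_one_of_notMem_spectrum (z := ⟨z, hz⟩) hz_spectrum

section SpecialUnitary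

variable {α : Type*} [CommRing α] [StarRing α]

theorem diagonal_mem_unitaryGroup {d : n → α} (hd : ∀ i, d i ∈ unitary α) :
    diagonal d ∈ unitaryGroup n α := by
  simp [mem_unitaryGroup_iff, star_eq_conjTranspose, diagonal_conjTranspose, hd]

theorem smul_mem_specialUnitaryGroup {z : α} {A : Matrix n n α} (hz : z ∈ unitary α)
    (hA : A ∈ unitaryGroup n α) (hdet : z ^ Fintype.card n * A.det = 1) :
    z • A ∈ specialUnitaryGroup n α :=
  mem_specialUnitaryGroup_iff.2 ⟨Unitary.smul_mem_of_mem hz hA, by rw [det_smul, hdet]⟩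

theorem star_eq_adjugate_of_mem_specialUnitaryGroup {A : Matrix n n α}
    (hA : A ∈ specialUnitaryGroup n α) : star A = A.adjugate := by
  obtain ⟨hA_unitary, hA_det⟩ := mem_specialUnitaryGroup_iff.1 hA
  refine left_inv_eq_right_inv (mem_unitaryGroup_iff'.1 hA_unitary) ?_
  rw [mul_adjugate, hA_det, one_smul]

/-- The retraction `U(n) → SU(n)` dividing the `i`-th column by the determinant. -/
def specialUnitaryRetraction (i : n) (u : unitaryGroup n α) : specialUnitaryGroup n α :=
  ⟨u * diagonal (Function.update 1 i (star (u : Matrix n n α).det)), by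
    have hdet : (u : Matrix n n α).det ∈ unitary α := det_of_mem_unitary u.2
    refine mem_specialUnitaryGroup_iff.2 ⟨mul_mem u.2 (diagonal_mem_unitaryGroup fun j => ?_), ?_⟩
    · rcases eq_or_ne j i with rfl | hj
      · simpa using Unitary.star_mem hdet
      · simp [hj, one_mem]
    · simp [Finset.prod_update_of_mem, hdet]⟩

theorem specialUnitaryRetraction_surjective (i : n) :
    Function.Surjective (specialUnitaryRetraction (α := α) i) := by
  intro A
  obtain ⟨hA_unitary, hA_det⟩ := mem_specialUnitaryGroup_iff.1 A.2
  exact ⟨⟨A, hA_unitary⟩, Subtype.ext (by simp [specialUnitaryRetraction, hA_det])⟩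

theorem continuous_specialUnitaryRetraction [TopologicalSpace α] [IsTopologicalRing α]
    [ContinuousStar α] (i : n) : Continuous (specialUnitaryRetraction (α := α) i) :=
  .subtype_mk (continuous_subtype_val.matrix_mul
    (continuous_const.update i continuous_subtype_val.matrix_det.star).matrix_diagonal) _

end SpecialUnitary

instance pathConnectedSpace_specialUnitaryGroup :
    PathConnectedSpace (specialUnitaryGroup n ℂ) := by
  rcases isEmpty_or_nonempty n with _ | ⟨⟨i⟩⟩
  · have : Subsingleton (specialUnitaryGroup n ℂ) := Subtype.val_injective.subsingleton
    exact ⟨⟨1⟩, fun A B => Subsingleton.elim A B ▸ .refl A⟩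
  · exact (specialUnitaryRetraction_surjective i).pathConnectedSpace
      (continuous_specialUnitaryRetraction i)

end UnitaryGroups

section Quaternions

theorem quatToM2_one : quatToM2 1 = 1 := by
  ext i j
  fin_cases i <;> fin_cases j <;> simp [quatToM2, Complex.ext_iff]

theorem quatToM2_mul (p q : ℍ[ℝ]) : quatToM2 (p * q) = quatToM2 p * quatToM2 q := by
  ext i j
  fin_cases i <;> fin_cases j <;>
    simp [quatToM2, Matrix.mul_apply, Fin.sum_univ_two, Complex.ext_iff] <;> constructor <;> ring

theorem quatToM2_star (q : ℍ[ℝ]) : quatToM2 (star q) = star (quatToM2 q) := by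
  ext i j
  fin_cases i <;> fin_cases j <;> simp [quatToM2, Complex.ext_iff, Matrix.star_apply]

theorem det_quatToM2 (q : ℍ[ℝ]) : (quatToM2 q).det = (Quaternion.normSq q : ℝ) := by
  rw [Quaternion.normSq_def', Complex.ext_iff, Complex.ofReal_re, Complex.ofReal_im]
  simp only [quatToM2, det_fin_two_of, Complex.sub_re, Complex.sub_im, Complex.mul_re,
    Complex.mul_im]
  constructor <;> ring

theorem mem_unitary_quaternion_iff_normSq_eq_one {q : ℍ[ℝ]} :
    q ∈ unitary ℍ[ℝ] ↔ Quaternion.normSq q = 1 := by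
  rw [Unitary.mem_iff, Quaternion.star_mul_self, Quaternion.self_mul_star, and_self,
    ← Quaternion.coe_one, Quaternion.coe_inj]

theorem det_quatToM2_of_mem_unitary {q : ℍ[ℝ]} (hq : q ∈ unitary ℍ[ℝ]) :
    (quatToM2 q).det = 1 := by
  rw [det_quatToM2, mem_unitary_quaternion_iff_normSq_eq_one.1 hq, Complex.ofReal_one]

theorem quatToM2_mem_specialUnitaryGroup {q : ℍ[ℝ]} (hq : q ∈ unitary ℍ[ℝ]) :
    quatToM2 q ∈ specialUnitaryGroup (Fin 2) ℂ := by
  refine mem_specialUnitaryGroup_iff.2 ⟨?_, det_quatToM2_of_mem_unitary hq⟩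
  rw [mem_unitaryGroup_iff, ← quatToM2_star, ← quatToM2_mul, (Unitary.mem_iff.1 hq).2,
    quatToM2_one]

/-- The `ℝ`-linear left inverse of `quatToM2` that reads a quaternion off the first row. -/
def quatOfM2 : Matrix (Fin 2) (Fin 2) ℂ →ₗ[ℝ] ℍ[ℝ] where
  toFun A := ⟨(A 0 0).re, (A 0 0).im, (A 0 1).re, (A 0 1).im⟩
  map_add' _ _ := rfl
  map_smul' r A := by
    simp only [Matrix.smul_apply, Complex.real_smul, Complex.re_ofReal_mul, Complex.im_ofReal_mul]
    rfl

theorem quatOfM2_quatToM2 (q : ℍ[ℝ]) : quatOfM2 (quatToM2 q) = q := rfl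

theorem quatToM2_quatOfM2 {A : Matrix (Fin 2) (Fin 2) ℂ}
    (hA : A ∈ specialUnitaryGroup (Fin 2) ℂ) : quatToM2 (quatOfM2 A) = A := by
  have h_star := star_eq_adjugate_of_mem_specialUnitaryGroup hA
  rw [adjugate_fin_two] at h_star
  have h11 : A 1 1 = star (A 0 0) := congr_fun₂ h_star.symm 0 0
  have h10 : A 1 0 = -star (A 0 1) := by
    rw [← neg_eq_iff_eq_neg]
    exact congr_fun₂ h_star.symm 1 0
  ext i j
  fin_cases i <;> fin_cases j
  · rfl
  · rfl
  · exact h10.symm ▸ Complex.ext rfl (neg_neg (A 0 1).im).symm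
  · exact h11.symm

theorem quatOfM2_mem_unitary {A : Matrix (Fin 2) (Fin 2) ℂ}
    (hA : A ∈ specialUnitaryGroup (Fin 2) ℂ) : quatOfM2 A ∈ unitary ℍ[ℝ] := by
  have h_det := det_quatToM2 (quatOfM2 A)
  rw [quatToM2_quatOfM2 hA, (mem_specialUnitaryGroup_iff.1 hA).2] at h_det
  exact mem_unitary_quaternion_iff_normSq_eq_one.2 (mod_cast h_det.symm)

/-- The isomorphism `Sp(1) ≅ SU(2)` induced by `quatToM2`. -/
noncomputable def unitaryQuaternionEquiv :
    unitary ℍ[ℝ] ≃* specialUnitaryGroup (Fin 2) ℂ where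
  toFun q := ⟨quatToM2 q, quatToM2_mem_specialUnitaryGroup q.2⟩
  invFun A := ⟨quatOfM2 A, quatOfM2_mem_unitary A.2⟩
  left_inv q := Subtype.ext (quatOfM2_quatToM2 q)
  right_inv A := Subtype.ext (quatToM2_quatOfM2 A.2)
  map_mul' p q := Subtype.ext (quatToM2_mul p q)

theorem continuous_unitaryQuaternionEquiv_symm : Continuous unitaryQuaternionEquiv.symm :=
  .subtype_mk (quatOfM2.continuous_of_finiteDimensional.comp continuous_subtype_val) _

end Quaternions

section UnimodularGroup

/-- The character `(λ, q, m) ↦ λ det m`, whose twelfth power is the determinant on `H_F`. -/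
noncomputable def reducedDet (u : AF) : ℂ := u.1 * u.2.2.det

theorem continuous_reducedDet : Continuous reducedDet :=
  continuous_fst.mul continuous_snd.snd.matrix_det

theorem reducedDet_one : reducedDet 1 = 1 := by
  simp [reducedDet]

theorem DetHF_eq_reducedDet_pow {u : AF} (hu : u ∈ unitary AF) :
    DetHF u = reducedDet u ^ 12 := by
  simp only [mem_unitary_prod_iff] at hu
  have h_diag : (diagonal ![u.1, starRingEnd ℂ u.1]).det = 1 := by
    simpa [det_diagonal] using (Unitary.mem_iff.1 hu.1).2
  rw [DetHF, h_diag, det_quatToM2_of_mem_unitary hu.2.1, reducedDet]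
  ring

theorem finite_reducedDet_image_SUAF : ((fun u : unitary AF => reducedDet u) '' SUAF).Finite := by
  refine (Polynomial.nthRootsFinset 12 (1 : ℂ)).finite_toSet.subset ?_
  rintro _ ⟨u, hu, rfl⟩
  rw [Finset.mem_coe, Polynomial.mem_nthRootsFinset (by norm_num),
    ← DetHF_eq_reducedDet_pow u.2]
  exact hu

theorem SUAF_inter_reducedDet_fiber :
    SUAF ∩ (fun u : unitary AF => reducedDet u) ⁻¹' {1} =
      {u : unitary AF | reducedDet u = 1} := by
  refine Set.inter_eq_right.2 fun u (hu : reducedDet u = 1) => ?_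
  change DetHF u = 1
  rw [DetHF_eq_reducedDet_pow u.2, hu, one_pow]

/-- The homomorphism `(z, A, B) ↦ (z³, A, z⁻¹B)` that exhibits the identity component of
`SU(A_F)` as a quotient of `U(1) × SU(2) × SU(3)`; `A` is read as a unit quaternion. -/
noncomputable def coveringHom :
    unitary ℂ × specialUnitaryGroup (Fin 2) ℂ × specialUnitaryGroup (Fin 3) ℂ →* unitary AF where
  toFun g := ⟨((g.1 : ℂ) ^ 3, unitaryQuaternionEquiv.symm g.2.1,
      star (g.1 : ℂ) • (g.2.2 : Matrix (Fin 3) (Fin 3) ℂ)),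
    mem_unitary_prod_iff.2 ⟨pow_mem g.1.2 3, mem_unitary_prod_iff.2
      ⟨Subtype.prop _, Unitary.smul_mem_of_mem (Unitary.star_mem g.1.2)
        (specialUnitaryGroup_le_unitaryGroup g.2.2.2)⟩⟩⟩
  map_one' := by ext1; simp
  map_mul' x y := by ext1; simp [mul_pow, smul_smul, mul_comm]

theorem continuous_coveringHom : Continuous coveringHom :=
  .subtype_mk (.prodMk (by fun_prop) (.prodMk
    (continuous_subtype_val.comp (continuous_unitaryQuaternionEquiv_symm.comp (by fun_prop)))
    (by fun_prop))) _

theorem range_coveringHom :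
    Set.range coveringHom = {u : unitary AF | reducedDet u = 1} := by
  ext u
  constructor
  · rintro ⟨⟨z, A, B⟩, rfl⟩
    have hB : (B : Matrix (Fin 3) (Fin 3) ℂ).det = 1 := (mem_specialUnitaryGroup_iff.1 B.2).2
    change (z : ℂ) ^ 3 * (star (z : ℂ) • (B : Matrix (Fin 3) (Fin 3) ℂ)).det = 1
    rw [det_smul, hB, Fintype.card_fin, mul_one, ← mul_pow, Unitary.mul_star_self_of_mem z.2,
      one_pow]
  · obtain ⟨⟨w, q, m⟩, hu⟩ := u
    intro (h : w * m.det = 1)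
    simp only [mem_unitary_prod_iff] at hu
    obtain ⟨hw, hq, hm⟩ := hu
    obtain ⟨z, hz⟩ := exists_unitary_complex_pow_eq ⟨w, hw⟩ three_ne_zero
    have hz_coe : (z : ℂ) ^ 3 = w := congrArg Subtype.val hz
    have hzm : (z : ℂ) • m ∈ specialUnitaryGroup (Fin 3) ℂ :=
      smul_mem_specialUnitaryGroup z.2 hm (by rw [Fintype.card_fin, hz_coe, h])
    refine ⟨(z, unitaryQuaternionEquiv ⟨q, hq⟩, ⟨(z : ℂ) • m, hzm⟩), Subtype.ext ?_⟩
    have hz_smul : star (z : ℂ) • (z : ℂ) • m = m := by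
      rw [smul_smul, Unitary.star_mul_self_of_mem z.2, one_smul]
    exact Prod.ext hz_coe (Prod.ext (by simp [coveringHom]) hz_smul)

theorem eq_of_coveringHom_eq_of_fst_eq
    {g h : unitary ℂ × specialUnitaryGroup (Fin 2) ℂ × specialUnitaryGroup (Fin 3) ℂ}
    (hgh : coveringHom g = coveringHom h) (hfst : g.1 = h.1) : g = h := by
  have h_coe : (coveringHom g : AF) = coveringHom h := congrArg Subtype.val hgh
  have h_quat : unitaryQuaternionEquiv.symm g.2.1 = unitaryQuaternionEquiv.symm h.2.1 :=
    Subtype.ext (congrArg (fun u : AF => u.2.1) h_coe)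
  have h_smul : g.1⁻¹ • (g.2.2 : Matrix (Fin 3) (Fin 3) ℂ) = h.1⁻¹ • h.2.2 :=
    congrArg (fun u : AF => u.2.2) h_coe
  rw [hfst] at h_smul
  exact Prod.ext hfst (Prod.ext (unitaryQuaternionEquiv.symm.injective h_quat)
    (Subtype.ext (MulAction.injective h.1⁻¹ h_smul)))

theorem finite_coveringHom_ker : {g | coveringHom g = 1}.Finite := by
  refine Set.Finite.of_finite_image (f := fun g => (g.1 : ℂ)) ?_ fun g hg h hh hfst =>
    eq_of_coveringHom_eq_of_fst_eq (hg.trans hh.symm) (Subtype.ext hfst)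
  refine (Polynomial.nthRootsFinset 3 (1 : ℂ)).finite_toSet.subset ?_
  rintro _ ⟨g, hg, rfl⟩
  rw [Finset.mem_coe, Polynomial.mem_nthRootsFinset (by norm_num)]
  exact congrArg (fun u : unitary AF => (u : AF).1) hg

theorem connectedComponentIn_SUAF_one :
    connectedComponentIn SUAF 1 = {u : unitary AF | reducedDet u = 1} := by
  have h_fiber : SUAF ∩ (fun u : unitary AF => reducedDet u) ⁻¹' {reducedDet (1 : unitary AF)} =
      {u : unitary AF | reducedDet u = 1} := by
    rw [OneMemClass.coe_one, reducedDet_one, SUAF_inter_reducedDet_fiber]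
  have h_one : (1 : unitary AF) ∈ SUAF :=
    (SUAF_inter_reducedDet_fiber.ge reducedDet_one).1
  rw [← h_fiber]
  refine connectedComponentIn_eq_inter_fiber
    (continuous_reducedDet.comp continuous_subtype_val).continuousOn
    finite_reducedDet_image_SUAF.countable.isTotallyDisconnected h_one ?_
  rw [h_fiber, ← range_coveringHom]
  exact isPreconnected_range continuous_coveringHom

end UnimodularGroup

/-- `SU(A_F)` is, up to a finite abelian group `Γ`, the group `U(1)×SU(2)×SU(3)`:
there is a continuous homomorphism from `U(1)×SU(2)×SU(3)` to `U(A_F)` landing in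
`SU(A_F)`, with image exactly the connected component of the identity of `SU(A_F)`
and finite abelian kernel `Γ` (so the identity component is `(U(1)×SU(2)×SU(3))/Γ`). -/
theorem SUAF_identity_component :
    ∃ φ : (unitary ℂ × Matrix.specialUnitaryGroup (Fin 2) ℂ ×
            Matrix.specialUnitaryGroup (Fin 3) ℂ) →* unitary AF,
      Continuous φ ∧
      (∀ g, DetHF ((φ g : unitary AF) : AF) = 1) ∧
      Set.range φ = connectedComponentIn SUAF 1 ∧
      {g | φ g = 1}.Finite ∧
      (∀ x y : unitary ℂ × Matrix.specialUnitaryGroup (Fin 2) ℂ ×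
          Matrix.specialUnitaryGroup (Fin 3) ℂ,
        φ x = 1 → φ y = 1 → x * y = y * x) := by
  have h_range : Set.range coveringHom = connectedComponentIn SUAF 1 := by
    rw [range_coveringHom, connectedComponentIn_SUAF_one]
  refine ⟨coveringHom, continuous_coveringHom, fun g => ?_, h_range, finite_coveringHom_ker,
    fun x y hx hy => ?_⟩
  · exact connectedComponentIn_subset SUAF 1 (h_range.le (Set.mem_range_self g))
  · refine eq_of_coveringHom_eq_of_fst_eq ?_ (mul_comm x.1 y.1)
    rw [map_mul, map_mul, hx, hy]
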